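/- In the fusion algebra ℱ, for all n, m ∈ ℕ and all finite sequences α₁,…,α_n, β₁,…,β_m of pairs of positive integers: (Π_{i=1}^{n} a_{⟩α_i})·(Π_{i=1}^{n} a_{α_i⟨})·(Π_{j=1}^{m} a_{⟩β_j})·(Π_{j=1}^{m} a_{β_j⟨}) = Σ_{k=0}^{min(n,m)} Σ_{1≤i₁<⋯<i_k≤n} Σ_{j₁,…,j_k pairwise distinct in {1,…,m}} (Π_{j∉{j₁,…,j_k}} a_{⟩β_j})·(Π_{i∉{i₁,…,i_k}} a_{⟩α_i})·(Π_{ℓ=1}^{k} a_{⟩α_{i_ℓ}β_{j_ℓ}})·(Π_{j∉{j₁,…,j_k}} a_{β_j⟨})·(Π_{i∉{i₁,…,i_k}} a_{α_i⟨})·(Π_{ℓ=1}^{k} a_{α_{i_ℓ}β_{j_ℓ}⟨}), where α_{i_ℓ}β_{j_ℓ} denotes the concatenation of the two sequences (the order of the factors within each displayed product is immaterial, since red letters commute with red letters and blue letters with blue letters in ℱ). -/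

import Mathlib

inductive Brk : Type
  | lt  -- ⟨
  | gt  -- ⟩
deriving DecidableEq

/-- finite sequences of pairs of positive integers -/
abbrev PSeq := List (ℕ+ × ℕ+)

/-- the alphabet 𝒜: red letters `a_{•γ}` and blue letters `a_{γ◇}` -/
inductive FLetter : Type
  | red (b : Brk) (γ : PSeq)
  | blue (γ : PSeq) (d : Brk)
deriving DecidableEq

/-- the free associative algebra ℂ⟨𝒜⟩ -/
abbrev FreeA := FreeAlgebra ℂ FLetter

noncomputable def ιA (e : FLetter) : FreeA := FreeAlgebra.ι ℂ e

noncomputable def wordProd (l : List FLetter) : FreeA := (l.map ιA).prod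

/-- the letters of `𝒜_{⟨ ⟩}` -/
def IsCentral : FLetter → Prop
  | .red .lt _ => True
  | .blue _ .gt => True
  | _ => False

/-- the generating relations of the ideal 𝒥_F -/
inductive FRel : FreeA → FreeA → Prop
  | central (e f : FLetter) (he : IsCentral e) :
      FRel (ιA e * ιA f) (ιA f * ιA e)
  | red_comm (b b' : Brk) (γ γ' : PSeq) :
      FRel (ιA (.red b γ) * ιA (.red b' γ')) (ιA (.red b' γ') * ιA (.red b γ))
  | blue_comm (d d' : Brk) (γ γ' : PSeq) :
      FRel (ιA (.blue γ d) * ιA (.blue γ' d')) (ιA (.blue γ' d') * ιA (.blue γ d))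
  | fusion (b d : Brk) (α β : PSeq) (v x : List FLetter) :
      FRel (ιA (.red b α) * wordProd v * ιA (.blue α .lt) * ιA (.red .gt β) *
              wordProd x * ιA (.blue β d))
           (ιA (.red b α) * wordProd v * ιA (.red .gt β) * ιA (.blue α .lt) *
              wordProd x * ιA (.blue β d)
             + ιA (.red b (α ++ β)) * wordProd v * wordProd x * ιA (.blue (α ++ β) d))

/-- the fusion algebra ℱ = ℂ⟨𝒜⟩/𝒥_F -/
abbrev FA := RingQuot FRel

noncomputable def mkF : FreeA →ₐ[ℂ] FA := RingQuot.mkAlgHom ℂ FRel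

/-- the red letter `a_{•γ}` in ℱ -/
noncomputable def Rl (b : Brk) (γ : PSeq) : FA := mkF (ιA (.red b γ))

/-- the blue letter `a_{γ◇}` in ℱ -/
noncomputable def Bll (γ : PSeq) (d : Brk) : FA := mkF (ιA (.blue γ d))

/-!
The elements `a_{•γ} v a_{γ◇}` of `ℱ` define operators `v ↦ a_{•γ} v a_{γ◇}` which commute with each
other, and each of the products in the theorem is obtained by applying such operators to `1`. Since
words span `ℱ`, the fusion relation holds with arbitrary elements in place of the words `v` and `x`;
iterating it moves a blue letter `a_{α⟨}` through the whole product over the `β_j`, at the cost of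
one extra term for each `j`, in which `α` and `β_j` are concatenated. This is a recursion on `n`:
either `α₁` stays unmatched, or it is matched with some `β_j`, which then leaves the `β`-family.
-/

lemma mkF_eq_mkF {x y : FreeA} (h : FRel x y) : mkF x = mkF y := RingQuot.mkAlgHom_rel ℂ h

lemma red_mul_red_comm (b b' : Brk) (γ γ' : PSeq) : Rl b γ * Rl b' γ' = Rl b' γ' * Rl b γ := by
  simpa only [Rl, map_mul] using mkF_eq_mkF (.red_comm b b' γ γ')

lemma blue_mul_blue_comm (γ γ' : PSeq) (d d' : Brk) :
    Bll γ d * Bll γ' d' = Bll γ' d' * Bll γ d := by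
  simpa only [Bll, map_mul] using mkF_eq_mkF (.blue_comm d d' γ γ')

lemma span_range_wordProd : Submodule.span ℂ (Set.range wordProd) = ⊤ := by
  have closure_le : (Submonoid.closure (Set.range ιA) : Set FreeA) ⊆ Set.range wordProd := by
    rw [← FreeMonoid.mrange_lift]
    rintro _ ⟨w, rfl⟩
    exact ⟨w.toList, (FreeMonoid.lift_apply ιA w).symm⟩
  rw [eq_top_iff, ← Algebra.top_toSubmodule, ← FreeAlgebra.adjoin_range_ι, Algebra.adjoin_eq_span]
  exact Submodule.span_mono closure_le

lemma span_range_mkF_wordProd : Submodule.span ℂ (Set.range (mkF ∘ wordProd)) = ⊤ := by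
  have surjective : Function.Surjective mkF.toLinearMap := RingQuot.mkAlgHom_surjective ℂ FRel
  rw [Set.range_comp, ← AlgHom.coe_toLinearMap, ← Submodule.map_span, span_range_wordProd,
    Submodule.map_top, LinearMap.range_eq_top.mpr surjective]

lemma fusion_relation (b d : Brk) (α β : PSeq) (v x : FA) :
    Rl b α * v * Bll α .lt * Rl .gt β * x * Bll β d =
      Rl b α * v * Rl .gt β * Bll α .lt * x * Bll β d +
        Rl b (α ++ β) * v * x * Bll (α ++ β) d := by
  have mem (y : FA) : y ∈ Submodule.span ℂ (Set.range (mkF ∘ wordProd)) :=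
    span_range_mkF_wordProd ▸ Submodule.mem_top
  induction mem v, mem x using Submodule.span_induction₂ with
  | mem_mem _ _ hv hx =>
    obtain ⟨l, rfl⟩ := hv
    obtain ⟨l', rfl⟩ := hx
    simpa only [Rl, Bll, map_mul, map_add, Function.comp_apply] using
      mkF_eq_mkF (.fusion b d α β l l')
  | zero_left => simp only [mul_zero, zero_mul, add_zero]
  | zero_right => simp only [mul_zero, zero_mul, add_zero]
  | add_left _ _ _ _ _ _ h₁ h₂ => simp only [mul_add, add_mul, h₁, h₂]; abel
  | add_right _ _ _ _ _ _ h₁ h₂ => simp only [mul_add, add_mul, h₁, h₂]; abel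
  | smul_left c _ _ _ _ h => simp only [mul_smul_comm, smul_mul_assoc, h, smul_add]
  | smul_right c _ _ _ _ h => simp only [mul_smul_comm, smul_mul_assoc, h, smul_add]

section IndexedMultisets

variable {ι κ : Type*}

lemma map_val_insert [DecidableEq ι] (f : ι → κ) {j : ι} {T : Finset ι} (hj : j ∉ T) :
    (insert j T).val.map f = f j ::ₘ T.val.map f := by
  rw [Finset.insert_val_of_notMem hj, Multiset.map_cons]

lemma map_val_univ_succ {n : ℕ} (f : Fin (n + 1) → κ) :
    (Finset.univ : Finset (Fin (n + 1))).val.map f =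
      f 0 ::ₘ (Finset.univ : Finset (Fin n)).val.map (f ∘ Fin.succ) := by
  simp

lemma map_val_filter_univ {n : ℕ} (f : Fin n → κ) (P : Fin n → Prop)
    [DecidablePred P] :
    ({i | P i} : Finset (Fin n)).val.map f = (((List.finRange n).filter (P ·)).map f : List κ) :=
  rfl

end IndexedMultisets

/-- A bracketed sequence `•γ◇`, indexing a red letter `a_{•γ}` together with a blue letter
`a_{γ◇}`. -/
structure Bracketed where
  left : Brk
  seq : PSeq
  right : Brk

namespace Bracketed

noncomputable section

/-- The red letter `a_{•γ}` of `•γ◇`. -/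
def red (p : Bracketed) : FA := Rl p.left p.seq

/-- The blue letter `a_{γ◇}` of `•γ◇`. -/
def blue (p : Bracketed) : FA := Bll p.seq p.right

/-- The fusion `•αβ◇` of `•α⟨` and `⟩β◇`; the two inner brackets are discarded, whatever they
are. -/
def fuse (p q : Bracketed) : Bracketed := ⟨p.left, p.seq ++ q.seq, q.right⟩

lemma red_comm (p q : Bracketed) : p.red * q.red = q.red * p.red := red_mul_red_comm ..

lemma blue_comm (p q : Bracketed) : p.blue * q.blue = q.blue * p.blue := blue_mul_blue_comm ..

/-- The operator `v ↦ a_{•γ} v a_{γ◇}` on `ℱ`. -/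
def wrap (p : Bracketed) (v : FA) : FA := p.red * v * p.blue

lemma wrap_sum {κ : Type*} (p : Bracketed) (s : Finset κ) (f : κ → FA) :
    p.wrap (∑ i ∈ s, f i) = ∑ i ∈ s, p.wrap (f i) := by
  simp only [wrap, Finset.mul_sum, Finset.sum_mul]

instance : LeftCommutative wrap where
  left_comm p q v := by
    calc p.red * (q.red * v * q.blue) * p.blue
        = (p.red * q.red) * v * (q.blue * p.blue) := by simp only [mul_assoc]
      _ = (q.red * p.red) * v * (p.blue * q.blue) := by rw [red_comm, blue_comm]
      _ = q.red * (p.red * v * p.blue) * q.blue := by simp only [mul_assoc]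

lemma wrap_mul_wrap {p q : Bracketed} (hp : p.right = .lt) (hq : q.left = .gt) (v x : FA) :
    p.wrap v * q.wrap x =
      p.red * (v * q.red) * p.blue * x * q.blue + (p.fuse q).wrap (v * x) := by
  obtain ⟨b, α, _⟩ := p
  obtain ⟨_, β, d⟩ := q
  subst hp hq
  simpa only [wrap, red, blue, fuse, mul_assoc] using fusion_relation b d α β v x

/-- The nested product `a_{γ₁} ⋯ a_{γ_r} a_{γ_r} ⋯ a_{γ₁}` of all red and all blue letters of a
family of bracketed sequences. -/
def nest (s : Multiset Bracketed) : FA := s.foldr wrap 1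

lemma nest_cons (p : Bracketed) (s : Multiset Bracketed) : nest (p ::ₘ s) = p.wrap (nest s) :=
  Multiset.foldr_cons ..

lemma nest_coe (l : List Bracketed) : nest l = (l.map red).prod * (l.map blue).prod := by
  induction l with
  | nil => exact (mul_one 1).symm
  | cons p l ih =>
    have comm : Commute (l.map blue).prod p.blue :=
      Commute.list_prod_left _ _ fun _ h ↦ by
        obtain ⟨q, -, rfl⟩ := List.mem_map.mp h
        exact blue_comm q p
    rw [← Multiset.cons_coe, nest_cons, ih, List.map_cons, List.map_cons, List.prod_cons,
      List.prod_cons, ← comm.eq]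
    simp only [wrap, mul_assoc]

lemma wrap_mul_nest {ι : Type*} [DecidableEq ι] {p : Bracketed} {β : ι → Bracketed}
    (hp : p.right = .lt) (hβ : ∀ j, (β j).left = .gt) (T : Finset ι) (v : FA) :
    p.wrap v * nest (T.val.map β) =
      p.wrap (v * nest (T.val.map β)) +
        ∑ j ∈ T, (p.fuse (β j)).wrap (v * nest ((T.erase j).val.map β)) := by
  induction T using Finset.induction_on generalizing v with
  | empty => simp [nest]
  | insert j T hj ih =>
    have fused_in_tail :
        ∑ i ∈ T, (p.fuse (β i)).wrap (v * nest (((insert j T).erase i).val.map β)) =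
          (∑ i ∈ T, (p.fuse (β i)).wrap (v * (β j).red * nest ((T.erase i).val.map β))) *
            (β j).blue := by
      rw [Finset.sum_mul]
      refine Finset.sum_congr rfl fun i hi ↦ ?_
      have hij : j ≠ i := fun h ↦ hj (h ▸ hi)
      rw [Finset.erase_insert_of_ne hij, map_val_insert β (mt Finset.mem_of_mem_erase hj),
        nest_cons]
      simp only [wrap, mul_assoc, blue_comm (β j)]
    rw [map_val_insert β hj, nest_cons, Finset.sum_insert hj, Finset.erase_insert hj, fused_in_tail,
      wrap_mul_wrap hp (hβ j)]
    have move_past_tail := congrArg (· * (β j).blue) (ih (v * (β j).red))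
    simp only [wrap, add_mul, mul_assoc, blue_comm (β j) p] at move_past_tail ⊢
    rw [move_past_tail]
    abel

end

end Bracketed

section Tuples

variable {M : Type*} [AddCommMonoid M]

open scoped Classical in
/-- The strictly increasing `k`-tuples `i₁ < ⋯ < i_k` in `Fin n`. -/
noncomputable def strictMonoTuples (k n : ℕ) : Finset (Fin k → Fin n) := {f | StrictMono f}

lemma mem_strictMonoTuples {k n : ℕ} {f : Fin k → Fin n} :
    f ∈ strictMonoTuples k n ↔ StrictMono f := by
  simp [strictMonoTuples]

lemma strictMonoTuples_zero (n : ℕ) : strictMonoTuples 0 n = {Fin.elim0} := by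
  ext f
  simpa [mem_strictMonoTuples, Subsingleton.strictMono] using Subsingleton.elim _ _

lemma strictMonoTuples_eq_empty {k n : ℕ} (h : n < k) : strictMonoTuples k n = ∅ := by
  refine Finset.eq_empty_of_forall_notMem fun f hf ↦ h.not_ge ?_
  simpa using Fintype.card_le_of_injective f (mem_strictMonoTuples.mp hf).injective

lemma strictMonoTuples_succ (k n : ℕ) :
    strictMonoTuples (k + 1) (n + 1) =
      (strictMonoTuples (k + 1) n).image (Fin.succ ∘ ·) ∪
        (strictMonoTuples k n).image fun f ↦ Fin.cons 0 (Fin.succ ∘ f) := by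
  ext f
  simp only [Finset.mem_union, Finset.mem_image, mem_strictMonoTuples]
  constructor
  · intro hf
    have exists_lift (l : ℕ) (g : Fin l → Fin (n + 1)) (hg : StrictMono g) (hpos : ∀ i, 0 < g i) :
        ∃ g', StrictMono g' ∧ Fin.succ ∘ g' = g :=
      ⟨fun i ↦ (g i).pred (hpos i).ne', fun _ _ h ↦ Fin.pred_lt_pred_iff.mpr (hg h),
        funext fun _ ↦ Fin.succ_pred _ _⟩
    obtain h0 | h0 := (Fin.zero_le (f 0)).eq_or_lt
    · obtain ⟨g, hg, hgf⟩ := exists_lift k (Fin.tail f) (hf.comp Fin.strictMono_succ)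
        fun i ↦ h0 ▸ hf i.succ_pos
      exact .inr ⟨g, hg, by rw [hgf, h0, Fin.cons_self_tail]⟩
    · exact .inl (exists_lift _ f hf fun i ↦ h0.trans_le (hf.monotone i.zero_le))
  · rintro (⟨g, hg, rfl⟩ | ⟨g, hg, rfl⟩)
    · exact Fin.strictMono_succ.comp hg
    · exact Fin.strictMono_cons.mpr ⟨fun i ↦ (g i).succ_pos, Fin.strictMono_succ.comp hg⟩

lemma sum_strictMonoTuples_succ {k n : ℕ} (G : (Fin (k + 1) → Fin (n + 1)) → M) :
    ∑ f ∈ strictMonoTuples (k + 1) (n + 1), G f =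
      ∑ f ∈ strictMonoTuples (k + 1) n, G (Fin.succ ∘ f) +
        ∑ f ∈ strictMonoTuples k n, G (Fin.cons 0 (Fin.succ ∘ f)) := by
  have disjoint : Disjoint ((strictMonoTuples (k + 1) n).image (Fin.succ ∘ ·))
      ((strictMonoTuples k n).image fun f ↦ Fin.cons 0 (Fin.succ ∘ f)) := by
    simp only [Finset.disjoint_left, Finset.mem_image]
    rintro _ ⟨f, -, rfl⟩ ⟨g, -, h⟩
    exact Fin.succ_ne_zero _ (congrFun h 0).symm
  have cons_injective : Function.Injective fun f : Fin k → Fin n ↦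
      (Fin.cons 0 (Fin.succ ∘ f) : Fin (k + 1) → Fin (n + 1)) :=
    (Fin.cons_right_injective (α := fun _ ↦ Fin (n + 1)) 0).comp (Fin.succ_injective n).comp_left
  rw [strictMonoTuples_succ, Finset.sum_union disjoint,
    Finset.sum_image ((Fin.succ_injective n).comp_left.injOn),
    Finset.sum_image cons_injective.injOn]

lemma sum_range_strictMonoTuples_succ {n : ℕ} (G : ∀ k, (Fin k → Fin (n + 1)) → M) :
    ∑ k ∈ Finset.range (n + 2), ∑ f ∈ strictMonoTuples k (n + 1), G k f =
      ∑ k ∈ Finset.range (n + 1), ∑ f ∈ strictMonoTuples k n, G k (Fin.succ ∘ f) +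
        ∑ k ∈ Finset.range (n + 1), ∑ f ∈ strictMonoTuples k n,
          G (k + 1) (Fin.cons 0 (Fin.succ ∘ f)) := by
  have avoiding_zero : ∑ k ∈ Finset.range (n + 1), ∑ f ∈ strictMonoTuples k n, G k (Fin.succ ∘ f) =
      ∑ k ∈ Finset.range (n + 1), ∑ f ∈ strictMonoTuples (k + 1) n, G (k + 1) (Fin.succ ∘ f) +
        ∑ f ∈ strictMonoTuples 0 n, G 0 (Fin.succ ∘ f) := by
    rw [← Finset.sum_range_succ' fun k ↦ ∑ f ∈ strictMonoTuples k n, G k (Fin.succ ∘ f),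
      Finset.sum_range_succ _ (n + 1), strictMonoTuples_eq_empty n.lt_succ_self, Finset.sum_empty,
      add_zero]
  have zero_tuples : ∑ f ∈ strictMonoTuples 0 (n + 1), G 0 f =
      ∑ f ∈ strictMonoTuples 0 n, G 0 (Fin.succ ∘ f) := by
    simp only [strictMonoTuples_zero, Finset.sum_singleton]
    exact congrArg (G 0) (Subsingleton.elim _ _)
  rw [Finset.sum_range_succ', zero_tuples, avoiding_zero]
  simp only [sum_strictMonoTuples_succ, Finset.sum_add_distrib]
  abel

variable {ι : Type*} [DecidableEq ι]

/-- The `k`-tuples of pairwise distinct elements of `T`. -/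
def injectiveTuples (k : ℕ) (T : Finset ι) : Finset (Fin k → ι) :=
  {f ∈ Fintype.piFinset fun _ ↦ T | Function.Injective f}

lemma mem_injectiveTuples {k : ℕ} {T : Finset ι} {f : Fin k → ι} :
    f ∈ injectiveTuples k T ↔ (∀ l, f l ∈ T) ∧ Function.Injective f := by
  simp [injectiveTuples]

lemma injectiveTuples_zero (T : Finset ι) : injectiveTuples 0 T = {Fin.elim0} := by
  ext f
  simpa [mem_injectiveTuples, Function.injective_of_subsingleton] using Subsingleton.elim _ _

lemma injectiveTuples_eq_empty {k : ℕ} {T : Finset ι} (h : T.card < k) :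
    injectiveTuples k T = ∅ := by
  refine Finset.eq_empty_of_forall_notMem fun f hf ↦ h.not_ge ?_
  obtain ⟨hT, hinj⟩ := mem_injectiveTuples.mp hf
  simpa using Finset.card_le_card_of_injOn (s := .univ) f (fun l _ ↦ hT l) hinj.injOn

lemma cons_mem_injectiveTuples {k : ℕ} {T : Finset ι} {j : ι} {f : Fin k → ι} :
    (Fin.cons j f : Fin (k + 1) → ι) ∈ injectiveTuples (k + 1) T ↔
      j ∈ T ∧ f ∈ injectiveTuples k (T.erase j) := by
  simp only [mem_injectiveTuples, Fin.forall_fin_succ, Fin.cons_zero, Fin.cons_succ,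
    Fin.cons_injective_iff, Set.mem_range, not_exists, Finset.mem_erase, forall_and]
  tauto

lemma sum_injectiveTuples_succ {k : ℕ} (T : Finset ι) (G : (Fin (k + 1) → ι) → M) :
    ∑ f ∈ injectiveTuples (k + 1) T, G f =
      ∑ j ∈ T, ∑ f ∈ injectiveTuples k (T.erase j), G (Fin.cons j f) := by
  rw [Finset.sum_sigma']
  refine Finset.sum_bij' (fun f _ ↦ ⟨f 0, Fin.tail f⟩) (fun p _ ↦ Fin.cons p.1 p.2)
    (fun f hf ↦ ?_) (fun p hp ↦ ?_) (fun f _ ↦ Fin.cons_self_tail f) (fun _ _ ↦ rfl)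
    (fun f _ ↦ by rw [Fin.cons_self_tail])
  · rw [← Fin.cons_self_tail f, cons_mem_injectiveTuples] at hf
    exact Finset.mem_sigma.mpr hf
  · exact cons_mem_injectiveTuples.mpr (Finset.mem_sigma.mp hp)

lemma injectiveTuples_univ [Fintype ι] (k : ℕ)
    [DecidablePred (Function.Injective : (Fin k → ι) → Prop)] :
    injectiveTuples k (Finset.univ : Finset ι) = Finset.univ.filter Function.Injective := by
  ext f
  simp [mem_injectiveTuples]

lemma sum_range_min_injectiveTuples {n : ℕ} {T : Finset ι}
    (G : ∀ k, (Fin k → Fin n) → (Fin k → ι) → M) :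
    ∑ k ∈ Finset.range (min n T.card + 1), ∑ iF ∈ strictMonoTuples k n,
        ∑ jF ∈ injectiveTuples k T, G k iF jF =
      ∑ k ∈ Finset.range (n + 1), ∑ iF ∈ strictMonoTuples k n,
        ∑ jF ∈ injectiveTuples k T, G k iF jF := by
  refine Finset.sum_subset (Finset.range_mono (by lia)) fun k hk hk' ↦ ?_
  have hT : T.card < k := by
    simp only [Finset.mem_range] at hk hk'
    lia
  simp only [injectiveTuples_eq_empty hT, Finset.sum_empty, Finset.sum_const_zero]

end Tuples

namespace Bracketed

section Matching

variable {ι : Type*} [DecidableEq ι] {n k : ℕ}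

/-- The bracketed sequences that remain when the `α_i`, `i : Fin n`, and the `β_j`, `j ∈ T`, are
matched along `i_ℓ ↔ j_ℓ`: the unmatched `β_j`, the unmatched `α_i` and the fusions of the matched
pairs. -/
def matched (α : Fin n → Bracketed) (β : ι → Bracketed) (T : Finset ι) (iF : Fin k → Fin n)
    (jF : Fin k → ι) : Multiset Bracketed :=
  {j ∈ T | ∀ l, jF l ≠ j}.val.map β +
    ({i | ∀ l, iF l ≠ i} : Finset (Fin n)).val.map α +
    (Finset.univ : Finset (Fin k)).val.map fun l ↦ (α (iF l)).fuse (β (jF l))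

lemma matched_succ (α : Fin (n + 1) → Bracketed) (β : ι → Bracketed) (T : Finset ι)
    (iF : Fin k → Fin n) (jF : Fin k → ι) :
    matched α β T (Fin.succ ∘ iF) jF = α 0 ::ₘ matched (α ∘ Fin.succ) β T iF jF := by
  have unmatched : ({i | ∀ l, (Fin.succ ∘ iF) l ≠ i} : Finset (Fin (n + 1))) =
      Finset.cons 0 (({i | ∀ l, iF l ≠ i} : Finset (Fin n)).map (Fin.succEmb n)) (by simp) := by
    ext i
    cases i using Fin.cases <;> simp [Fin.succ_ne_zero]
  rw [matched, matched, unmatched, Finset.cons_val, Multiset.map_cons, Finset.map_val,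
    Multiset.map_map, Multiset.add_cons, Multiset.cons_add]
  rfl

lemma matched_cons (α : Fin (n + 1) → Bracketed) (β : ι → Bracketed) (T : Finset ι)
    (iF : Fin k → Fin n) (j : ι) (jF : Fin k → ι) :
    matched α β T (Fin.cons 0 (Fin.succ ∘ iF) : Fin (k + 1) → Fin (n + 1))
        (Fin.cons j jF : Fin (k + 1) → ι) =
      (α 0).fuse (β j) ::ₘ matched (α ∘ Fin.succ) β (T.erase j) iF jF := by
  have unmatched_left : ({i | ∀ l, (Fin.cons 0 (Fin.succ ∘ iF) : Fin (k + 1) → Fin (n + 1)) l ≠ i} :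
      Finset (Fin (n + 1))) = ({i | ∀ l, iF l ≠ i} : Finset (Fin n)).map (Fin.succEmb n) := by
    ext i
    cases i using Fin.cases <;> simp [Fin.forall_fin_succ, eq_comm]
  have unmatched_right : {i ∈ T | ∀ l, (Fin.cons j jF : Fin (k + 1) → ι) l ≠ i} =
      {i ∈ T.erase j | ∀ l, jF l ≠ i} := by
    ext i
    simp only [Finset.mem_filter, Fin.forall_fin_succ, Fin.cons_zero, Fin.cons_succ,
      Finset.mem_erase]
    tauto
  rw [matched, matched, unmatched_left, unmatched_right, map_val_univ_succ, Multiset.add_cons,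
    Finset.map_val, Multiset.map_map]
  rfl

theorem nest_mul_nest {α : Fin n → Bracketed} {β : ι → Bracketed} (hα : ∀ i, (α i).right = .lt)
    (hβ : ∀ j, (β j).left = .gt) (T : Finset ι) :
    nest ((Finset.univ : Finset (Fin n)).val.map α) * nest (T.val.map β) =
      ∑ k ∈ Finset.range (n + 1), ∑ iF ∈ strictMonoTuples k n, ∑ jF ∈ injectiveTuples k T,
        nest (matched α β T iF jF) := by
  induction n generalizing T with
  | zero => simp [strictMonoTuples_zero, injectiveTuples_zero, matched, nest]
  | succ n ih =>
    rw [map_val_univ_succ, nest_cons, wrap_mul_nest (hα 0) hβ, sum_range_strictMonoTuples_succ]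
    simp only [ih (α := α ∘ Fin.succ) fun i ↦ hα i.succ, wrap_sum, sum_injectiveTuples_succ,
      matched_succ, matched_cons, nest_cons]
    rw [Finset.sum_comm (s := T)]
    simp only [Finset.sum_comm (s := T)]

end Matching

lemma nest_univ_val_map {n : ℕ} (f : Fin n → Bracketed) :
    nest ((Finset.univ : Finset (Fin n)).val.map f) =
      ((List.finRange n).map (red ∘ f)).prod * ((List.finRange n).map (blue ∘ f)).prod := by
  rw [Finset.val_univ_fin, Multiset.map_coe, nest_coe, List.map_map, List.map_map]

lemma nest_matched_univ {n m k : ℕ} (α : Fin n → Bracketed) (β : Fin m → Bracketed)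
    (iF : Fin k → Fin n) (jF : Fin k → Fin m) :
    nest (matched α β .univ iF jF) =
      (((List.finRange m).filter (∀ l, jF l ≠ ·)).map (red ∘ β)).prod *
        (((List.finRange n).filter (∀ l, iF l ≠ ·)).map (red ∘ α)).prod *
        ((List.finRange k).map fun l ↦ ((α (iF l)).fuse (β (jF l))).red).prod *
      ((((List.finRange m).filter (∀ l, jF l ≠ ·)).map (blue ∘ β)).prod *
        (((List.finRange n).filter (∀ l, iF l ≠ ·)).map (blue ∘ α)).prod *
        ((List.finRange k).map fun l ↦ ((α (iF l)).fuse (β (jF l))).blue).prod) := by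
  rw [matched, map_val_filter_univ, map_val_filter_univ, Fin.univ_val_map, Multiset.coe_add,
    Multiset.coe_add, nest_coe]
  simp [Function.comp_def, List.ofFn_eq_map, mul_assoc]

end Bracketed

open scoped Classical in
theorem fusion_product_formula_general (n m : ℕ) (b : Fin n → Brk) (α : Fin n → PSeq)
    (β : Fin m → PSeq) (d : Fin m → Brk) :
    ((List.finRange n).map fun i => Rl (b i) (α i)).prod *
      ((List.finRange n).map fun i => Bll (α i) .lt).prod *
      ((List.finRange m).map fun j => Rl .gt (β j)).prod *
      ((List.finRange m).map fun j => Bll (β j) (d j)).prod =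
    ∑ k ∈ Finset.range (min n m + 1),
      ∑ iF ∈ Finset.univ.filter (fun f : Fin k → Fin n => StrictMono f),
        ∑ jF ∈ Finset.univ.filter (fun f : Fin k → Fin m => Function.Injective f),
          (((List.finRange m).filter fun j => decide (∀ ℓ, jF ℓ ≠ j)).map
              fun j => Rl .gt (β j)).prod *
          (((List.finRange n).filter fun i => decide (∀ ℓ, iF ℓ ≠ i)).map
              fun i => Rl (b i) (α i)).prod *
          ((List.finRange k).map fun ℓ => Rl (b (iF ℓ)) (α (iF ℓ) ++ β (jF ℓ))).prod *
          ((((List.finRange m).filter fun j => decide (∀ ℓ, jF ℓ ≠ j)).map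
              fun j => Bll (β j) (d j)).prod *
            (((List.finRange n).filter fun i => decide (∀ ℓ, iF ℓ ≠ i)).map
              fun i => Bll (α i) .lt).prod *
            ((List.finRange k).map fun ℓ => Bll (α (iF ℓ) ++ β (jF ℓ)) (d (jF ℓ))).prod) := by
  let p i : Bracketed := ⟨b i, α i, .lt⟩
  let q j : Bracketed := ⟨.gt, β j, d j⟩
  calc
    _ = Bracketed.nest ((Finset.univ : Finset (Fin n)).val.map p) *
          Bracketed.nest ((Finset.univ : Finset (Fin m)).val.map q) := by
      rw [Bracketed.nest_univ_val_map, Bracketed.nest_univ_val_map, ← mul_assoc]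
      rfl
    _ = ∑ k ∈ Finset.range (min n m + 1), ∑ iF ∈ strictMonoTuples k n,
          ∑ jF ∈ injectiveTuples k Finset.univ,
            Bracketed.nest (Bracketed.matched p q Finset.univ iF jF) := by
      rw [Bracketed.nest_mul_nest (fun _ ↦ rfl) (fun _ ↦ rfl), ← sum_range_min_injectiveTuples,
        Finset.card_fin]
    _ = _ := by
      simp only [strictMonoTuples, injectiveTuples_univ, Bracketed.nest_matched_univ]
      rfl

open scoped Classical in
/-- the product formula in the fusion algebra ℱ:
`(Π a_{⟩α_i})(Π a_{α_i⟨})(Π a_{⟩β_j})(Π a_{β_j⟨})` equals the sum, over `k`,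
over strictly increasing `i₁<⋯<i_k` and pairwise distinct `j₁,…,j_k`, of
`(Π_{j∉J} a_{⟩β_j})(Π_{i∉I} a_{⟩α_i})(Π_ℓ a_{⟩α_{i_ℓ}β_{j_ℓ}})`
times the analogous blue product. -/
theorem fusion_product_formula (n m : ℕ) (α : Fin n → PSeq) (β : Fin m → PSeq) :
    ((List.finRange n).map fun i => Rl .gt (α i)).prod *
      ((List.finRange n).map fun i => Bll (α i) .lt).prod *
      ((List.finRange m).map fun j => Rl .gt (β j)).prod *
      ((List.finRange m).map fun j => Bll (β j) .lt).prod =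
    ∑ k ∈ Finset.range (min n m + 1),
      ∑ iF ∈ Finset.univ.filter (fun f : Fin k → Fin n => StrictMono f),
        ∑ jF ∈ Finset.univ.filter (fun f : Fin k → Fin m => Function.Injective f),
          (((List.finRange m).filter fun j => decide (∀ ℓ, jF ℓ ≠ j)).map
              fun j => Rl .gt (β j)).prod *
          (((List.finRange n).filter fun i => decide (∀ ℓ, iF ℓ ≠ i)).map
              fun i => Rl .gt (α i)).prod *
          ((List.finRange k).map fun ℓ => Rl .gt (α (iF ℓ) ++ β (jF ℓ))).prod *
          ((((List.finRange m).filter fun j => decide (∀ ℓ, jF ℓ ≠ j)).map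
              fun j => Bll (β j) .lt).prod *
            (((List.finRange n).filter fun i => decide (∀ ℓ, iF ℓ ≠ i)).map
              fun i => Bll (α i) .lt).prod *
            ((List.finRange k).map fun ℓ => Bll (α (iF ℓ) ++ β (jF ℓ)) .lt).prod) := by
  exact fusion_product_formula_general n m (fun _ ↦ .gt) α β fun _ ↦ .lt
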